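/- For every 3×3 unitary matrix U, the 8×8 matrix Û with entries Û_{ij} = tr(Qᵢ U Qⱼ U†) has real entries and, regarded as a real matrix, is special orthogonal: Û·Ûᵀ = I₈ and det Û = 1. -/

import Mathlib

open Matrix Complex

noncomputable section

/-- ω = exp(2πi/3), a primitive third root of unity. -/
def ω : ℂ := exp (2 * Real.pi * I / 3)

/-- ζ = exp(2πi/9), a primitive ninth root of unity. -/
def ζ : ℂ := exp (2 * Real.pi * I / 9)

/-- The qutrit Pauli X matrix. -/
def Xmat : Matrix (Fin 3) (Fin 3) ℂ := !![0,0,1; 1,0,0; 0,1,0]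

/-- The qutrit Pauli Z matrix. -/
def Zmat : Matrix (Fin 3) (Fin 3) ℂ := !![1,0,0; 0,ω,0; 0,0,ω^2]

/-- The qutrit Hadamard matrix H = (1/(i√3))·[[1,1,1],[1,ω,ω²],[1,ω²,ω]]. -/
def Hmat : Matrix (Fin 3) (Fin 3) ℂ :=
  (I * (Real.sqrt 3 : ℂ))⁻¹ • !![1,1,1; 1,ω,ω^2; 1,ω^2,ω]

/-- The qutrit phase matrix S = ζ⁸·diag(1,1,ω). -/
def Smat : Matrix (Fin 3) (Fin 3) ℂ := ζ^8 • !![1,0,0; 0,1,0; 0,0,ω]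

/-- The qutrit T matrix T = diag(1,ζ,ζ⁸). -/
def Tmat : Matrix (Fin 3) (Fin 3) ℂ := !![1,0,0; 0,ζ,0; 0,0,ζ^8]

lemma omega_ne_zero : ω ≠ 0 := Complex.exp_ne_zero _
lemma zeta_ne_zero : ζ ≠ 0 := Complex.exp_ne_zero _

lemma omega_im_pos : 0 < ω.im := by
  have h : ω = Complex.exp ((2 * Real.pi / 3 : ℝ) * I) := by
    rw [ω]; push_cast; ring_nf
  rw [h, Complex.exp_ofReal_mul_I_im]
  apply Real.sin_pos_of_pos_of_lt_pi
  · positivity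
  · nlinarith [Real.pi_pos]

lemma omega_ne_one : ω ≠ 1 := by
  intro h
  have := omega_im_pos
  rw [h] at this
  simp at this

lemma omega_cube : ω ^ 3 = 1 := by
  rw [ω, ← Complex.exp_nat_mul]
  rw [show (3:ℕ) * (2 * Real.pi * I / 3) = 2 * Real.pi * I by push_cast; ring]
  exact Complex.exp_two_pi_mul_I

lemma detX : Xmat.det ≠ 0 := by
  simp [Xmat, Matrix.det_fin_three]

lemma detZ : Zmat.det ≠ 0 := by
  simp [Zmat, Matrix.det_fin_three, omega_ne_zero]

lemma detS : Smat.det ≠ 0 := by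
  simp [Smat, Matrix.det_fin_three, omega_ne_zero, zeta_ne_zero]

lemma detT : Tmat.det ≠ 0 := by
  simp [Tmat, Matrix.det_fin_three, zeta_ne_zero]

lemma detH : Hmat.det ≠ 0 := by
  rw [Hmat, Matrix.det_smul]
  apply mul_ne_zero
  · apply pow_ne_zero
    apply inv_ne_zero
    apply mul_ne_zero Complex.I_ne_zero
    simp [Complex.ofReal_ne_zero]
  · rw [Matrix.det_fin_three]
    simp [Matrix.vecHead, Matrix.vecTail]
    intro h
    have h3 : ω ^ 3 = 1 := omega_cube
    have key : 3 * ω * (ω - 1) = 0 := by linear_combination h + ω * h3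
    rcases mul_eq_zero.mp key with h' | h'
    · rcases mul_eq_zero.mp h' with h'' | h''
      · norm_num at h''
      · exact omega_ne_zero h''
    · exact omega_ne_one (by linear_combination h')

/-- X as an element of GL(3, ℂ). -/
def Xg : GL (Fin 3) ℂ := Matrix.GeneralLinearGroup.mkOfDetNeZero Xmat detX

/-- Z as an element of GL(3, ℂ). -/
def Zg : GL (Fin 3) ℂ := Matrix.GeneralLinearGroup.mkOfDetNeZero Zmat detZ

/-- H as an element of GL(3, ℂ). -/
def Hg : GL (Fin 3) ℂ := Matrix.GeneralLinearGroup.mkOfDetNeZero Hmat detH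

/-- S as an element of GL(3, ℂ). -/
def Sg : GL (Fin 3) ℂ := Matrix.GeneralLinearGroup.mkOfDetNeZero Smat detS

/-- T as an element of GL(3, ℂ). -/
def Tg : GL (Fin 3) ℂ := Matrix.GeneralLinearGroup.mkOfDetNeZero Tmat detT

/-- The Clifford group 𝒞: the subgroup of GL(3,ℂ) generated by H and S. -/
def Cliff : Subgroup (GL (Fin 3) ℂ) := Subgroup.closure {Hg, Sg}

/-- The Clifford+T group: the subgroup of GL(3,ℂ) generated by H, S and T. -/
def CliffT : Subgroup (GL (Fin 3) ℂ) := Subgroup.closure {Hg, Sg, Tg}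

/-- The subgroup 𝒮 of GL(3,ℂ) generated by S and X. -/
def Sgrp : Subgroup (GL (Fin 3) ℂ) := Subgroup.closure {Sg, Xg}

/-- Letters of words over the alphabet {H, S, T}. -/
inductive Letter : Type
  | H : Letter
  | S : Letter
  | T : Letter
  deriving DecidableEq

/-- The gate associated to a letter. -/
def Letter.g : Letter → GL (Fin 3) ℂ
  | .H => Hg
  | .S => Sg
  | .T => Tg

/-- The product of the letters of a word. -/
def wordProd (w : List Letter) : GL (Fin 3) ℂ := (w.map Letter.g).prod

/-- The allowed prefixes of a canonical form: ε, T, H²T. -/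
def Prefixes : Set (List Letter) := {[], [.T], [.H, .H, .T]}

/-- The allowed syllables of a canonical form: HT, H³T, SHT, SH³T, S²HT, S²H³T. -/
def Syllables : Set (List Letter) :=
  {[.H, .T], [.H, .H, .H, .T], [.S, .H, .T],
   [.S, .H, .H, .H, .T], [.S, .S, .H, .T], [.S, .S, .H, .H, .H, .T]}

/-- The T-count of a canonical form with prefix `p` and syllable list `ss`:
`k` if the prefix is empty and `k+1` otherwise, where `k` is the number of syllables. -/
def TCount (p : List Letter) (ss : List (List Letter)) : ℕ :=
  ss.length + (if p = [] then 0 else 1)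

/-- P₊ = (P + P²)/√6. -/
def Pplus (P : Matrix (Fin 3) (Fin 3) ℂ) : Matrix (Fin 3) (Fin 3) ℂ :=
  ((Real.sqrt 6 : ℂ))⁻¹ • (P + P ^ 2)

/-- P₋ = i(P − P²)/√6. -/
def Pminus (P : Matrix (Fin 3) (Fin 3) ℂ) : Matrix (Fin 3) (Fin 3) ℂ :=
  (I * ((Real.sqrt 6 : ℂ))⁻¹) • (P - P ^ 2)

/-- The ordered tuple (Q₁, …, Q₈) = (Z₊, X₊, (XZ)₊, (XZ²)₊, Z₋, X₋, (XZ)₋, (XZ²)₋). -/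
def Q : Fin 8 → Matrix (Fin 3) (Fin 3) ℂ :=
  ![Pplus Zmat, Pplus Xmat, Pplus (Xmat * Zmat), Pplus (Xmat * Zmat ^ 2),
    Pminus Zmat, Pminus Xmat, Pminus (Xmat * Zmat), Pminus (Xmat * Zmat ^ 2)]

/-- The adjoint representation Û of U, the 8×8 real matrix with
entries Û_{ij} = tr(Qᵢ U Qⱼ U†). -/
def adj (U : Matrix (Fin 3) (Fin 3) ℂ) : Matrix (Fin 8) (Fin 8) ℝ :=
  Matrix.of fun i j => (Matrix.trace (Q i * U * Q j * Uᴴ)).re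

/-- The top-left 4×4 quadrant Û₊₊. -/
def blockPP (A : Matrix (Fin 8) (Fin 8) ℝ) : Matrix (Fin 4) (Fin 4) ℝ :=
  Matrix.of fun i j => A ⟨i.val, by omega⟩ ⟨j.val, by omega⟩

/-- The top-right 4×4 quadrant Û₊₋. -/
def blockPM (A : Matrix (Fin 8) (Fin 8) ℝ) : Matrix (Fin 4) (Fin 4) ℝ :=
  Matrix.of fun i j => A ⟨i.val, by omega⟩ ⟨j.val + 4, by omega⟩

/-- The bottom-left 4×4 quadrant Û₋₊. -/
def blockMP (A : Matrix (Fin 8) (Fin 8) ℝ) : Matrix (Fin 4) (Fin 4) ℝ :=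
  Matrix.of fun i j => A ⟨i.val + 4, by omega⟩ ⟨j.val, by omega⟩

/-- The bottom-right 4×4 quadrant Û₋₋. -/
def blockMM (A : Matrix (Fin 8) (Fin 8) ℝ) : Matrix (Fin 4) (Fin 4) ℝ :=
  Matrix.of fun i j => A ⟨i.val + 4, by omega⟩ ⟨j.val + 4, by omega⟩

/-- α = sin(2π/9). -/
def αR : ℝ := Real.sin (2 * Real.pi / 9)

/-- The ring ℤ[α]: the subring of ℝ generated by 1/2 and α. -/
def Zα : Subring ℝ := Subring.closure {1/2, αR}

/-- The ring ℤ[1/2, 1/α]: the subring of ℝ generated by 1/2, α and α⁻¹. -/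
def Zhα : Subring ℝ := Subring.closure {1/2, αR, αR⁻¹}

lemma alpha_mem_Zα : αR ∈ Zα := Subring.subset_closure (by simp)

/-!
Vectorization turns `X ↦ U X Uᴴ` into the unitary matrix `conj U ⊗ U`, whose determinant is
`|det U| ^ (2 n) = 1`. Matrices that form an orthonormal basis for `tr (Aᴴ B)` have vectorizations
that are the columns of a unitary matrix, so the matrix of `X ↦ U X Uᴴ` in such a basis is special
unitary. When the basis consists of a multiple of the identity and a trace-zero family, this matrix
is block diagonal with a block `1`, which can be dropped; when the family is Hermitian, the
remaining block is real. The `Q i` are such a family because the Paulis `P = Z, X, XZ, XZ²` satisfy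
`Pᴴ = P²`, and together with their squares they are trace-zero and pairwise orthogonal.
-/

section AdjointMatrix

open scoped Kronecker

variable {m n ι R 𝕜 : Type*} [Fintype m] [Fintype n]

/-- The matrix whose columns are the vectorizations of a family of matrices. -/
def vecColumns (B : ι → Matrix m n R) : Matrix (n × m) ι R :=
  (Matrix.of fun i => vec (B i))ᵀ

/-- Orthonormality of a family of matrices for the Hilbert–Schmidt pairing `tr (Aᴴ B)`. -/
def TraceOrthonormal [DecidableEq ι] [Semiring R] [Star R] (B : ι → Matrix m n R) : Prop :=
  ∀ i j, ((B i)ᴴ * B j).trace = if i = j then 1 else 0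

/-- The Hilbert–Schmidt matrix coefficients of `X ↦ U X Uᴴ` in a family of matrices. -/
def adjointMatrix [Semiring R] [Star R] (B : ι → Matrix n n R) (U : Matrix n n R) :
    Matrix ι ι R :=
  Matrix.of fun i j => ((B i)ᴴ * (U * B j * Uᴴ)).trace

/-- A family of matrices together with a multiple of the identity, which completes a trace-zero
orthonormal family to an orthonormal basis. -/
def withScalar [DecidableEq n] [Semiring R] (c : R) (B : ι → Matrix n n R) :
    Unit ⊕ ι → Matrix n n R :=
  Sum.elim (fun _ => c • 1) B

/-- The real parts of the matrix coefficients of `X ↦ U X Uᴴ` in a family of matrices; for a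
Hermitian family this is the adjoint representation of `U`. -/
def realAdjointMatrix (B : ι → Matrix n n ℂ) (U : Matrix n n ℂ) : Matrix ι ι ℝ :=
  Matrix.of fun i j => (B i * U * B j * Uᴴ).trace.re

section StarRing

variable [CommRing R] [StarRing R]

lemma TraceOrthonormal.conjTranspose_vecColumns_mul [DecidableEq ι] {B : ι → Matrix m n R}
    (hB : TraceOrthonormal B) : (vecColumns B)ᴴ * vecColumns B = 1 := by
  ext i j
  rw [Matrix.one_apply, ← hB i j, ← star_vec_dotProduct_vec]
  rfl

lemma TraceOrthonormal.vecColumns_mul_conjTranspose [Fintype ι] [DecidableEq ι] [DecidableEq m]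
    [DecidableEq n] {B : ι → Matrix m n R} (hB : TraceOrthonormal B)
    (hcard : Fintype.card ι = Fintype.card n * Fintype.card m) :
    vecColumns B * (vecColumns B)ᴴ = 1 :=
  (mul_eq_one_comm_of_card_eq ι (n × m) R (by rw [hcard, Fintype.card_prod])).mp
    hB.conjTranspose_vecColumns_mul

lemma adjointMatrix_eq_conj_kronecker (B : ι → Matrix n n R) (U : Matrix n n R) :
    adjointMatrix B U = (vecColumns B)ᴴ * (U.map star ⊗ₖ U) * vecColumns B := by
  ext i j
  calc adjointMatrix B U i j = star (vec (B i)) ⬝ᵥ vec (U * B j * (U.map star)ᵀ) :=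
        (star_vec_dotProduct_vec _ _).symm
    _ = star (vec (B i)) ⬝ᵥ ((U.map star ⊗ₖ U) *ᵥ vec (B j)) := by rw [kronecker_mulVec_vec]
    _ = ((vecColumns B)ᴴ * (U.map star ⊗ₖ U) * vecColumns B) i j := by
        rw [Matrix.mul_assoc]; rfl

lemma conjTranspose_mul_mul_mem_unitaryGroup [Fintype ι] [DecidableEq ι] [DecidableEq n]
    {W : Matrix n ι R} (hW : Wᴴ * W = 1) (hW' : W * Wᴴ = 1) {A : Matrix n n R}
    (hA : A ∈ unitaryGroup n R) :
    Wᴴ * A * W ∈ unitaryGroup ι R := by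
  rw [mem_unitaryGroup_iff, star_eq_conjTranspose] at hA ⊢
  calc Wᴴ * A * W * (Wᴴ * A * W)ᴴ = Wᴴ * (A * (W * Wᴴ) * Aᴴ) * W := by
        simp only [conjTranspose_mul, conjTranspose_conjTranspose, Matrix.mul_assoc]
    _ = 1 := by rw [hW', Matrix.mul_one, hA, Matrix.mul_one, hW]

lemma det_map_star_kronecker_of_mem_unitaryGroup [DecidableEq n] {U : Matrix n n R}
    (hU : U ∈ unitaryGroup n R) :
    (U.map star ⊗ₖ U).det = 1 := by
  have hdet : (U.map star).det = star U.det := by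
    rw [← det_conjTranspose, ← det_transpose]; rfl
  rw [det_kronecker, hdet, ← mul_pow, (det_of_mem_unitary hU).1, one_pow]

lemma TraceOrthonormal.adjointMatrix_mem_specialUnitaryGroup [Fintype ι] [DecidableEq ι]
    [DecidableEq n] {B : ι → Matrix n n R} (hB : TraceOrthonormal B)
    (hcard : Fintype.card ι = Fintype.card n * Fintype.card n)
    {U : Matrix n n R} (hU : U ∈ unitaryGroup n R) :
    adjointMatrix B U ∈ specialUnitaryGroup ι R := by
  have hW := hB.conjTranspose_vecColumns_mul
  have hW' := hB.vecColumns_mul_conjTranspose hcard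
  rw [adjointMatrix_eq_conj_kronecker, mem_specialUnitaryGroup_iff]
  constructor
  · exact conjTranspose_mul_mul_mem_unitaryGroup hW hW'
      (kronecker_mem_unitary (map_star_mem_unitaryGroup_iff.mpr hU) hU)
  · rw [det_conj_of_mul_eq_one hW hW', det_map_star_kronecker_of_mem_unitaryGroup hU]

lemma TraceOrthonormal.withScalar_of_trace_eq_zero [DecidableEq ι] [DecidableEq n]
    {B : ι → Matrix n n R} (hB : TraceOrthonormal B) (htr : ∀ i, (B i).trace = 0) {c : R}
    (hc : star c * c * Fintype.card n = 1) : TraceOrthonormal (withScalar c B) := by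
  rintro (_ | i) (_ | j)
  · simpa [withScalar, mul_assoc, mul_left_comm] using hc
  · simp [withScalar, htr]
  · simp [withScalar, trace_conjTranspose, htr]
  · simpa [withScalar] using hB i j

lemma adjointMatrix_withScalar [DecidableEq n] {B : ι → Matrix n n R}
    (htr : ∀ i, (B i).trace = 0) {c : R} (hc : star c * c * Fintype.card n = 1)
    {U : Matrix n n R} (hU : U ∈ unitaryGroup n R) :
    adjointMatrix (withScalar c B) U = fromBlocks 1 0 0 (adjointMatrix B U) := by
  have hUU : U * Uᴴ = 1 := mem_unitaryGroup_iff.mp hU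
  have hUU' : Uᴴ * U = 1 := mem_unitaryGroup_iff'.mp hU
  have htrU (j : ι) : (U * B j * Uᴴ).trace = 0 := by
    rw [trace_mul_comm, ← Matrix.mul_assoc, hUU', Matrix.one_mul, htr]
  ext (_ | i) (_ | j)
  · simpa [adjointMatrix, withScalar, hUU, mul_assoc, mul_left_comm] using hc
  · simp [adjointMatrix, withScalar, htrU]
  · simp [adjointMatrix, withScalar, hUU, trace_conjTranspose, htr]
  · rfl

lemma fromBlocks_one_mem_specialUnitaryGroup_iff [Fintype ι] [DecidableEq ι] [DecidableEq n]
    {A : Matrix ι ι R} :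
    fromBlocks (1 : Matrix n n R) 0 0 A ∈ specialUnitaryGroup (n ⊕ ι) R ↔
      A ∈ specialUnitaryGroup ι R := by
  simp [mem_specialUnitaryGroup_iff, mem_unitaryGroup_iff, star_eq_conjTranspose,
    fromBlocks_conjTranspose, fromBlocks_multiply, ← fromBlocks_one]

end StarRing

lemma TraceOrthonormal.adjointMatrix_mem_specialUnitaryGroup_of_trace_eq_zero [Fintype ι]
    [DecidableEq ι] [DecidableEq n] [RCLike 𝕜] {B : ι → Matrix n n 𝕜} (hB : TraceOrthonormal B)
    (htr : ∀ i, (B i).trace = 0) (hcard : Fintype.card ι + 1 = Fintype.card n ^ 2)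
    {U : Matrix n n 𝕜} (hU : U ∈ unitaryGroup n 𝕜) :
    adjointMatrix B U ∈ specialUnitaryGroup ι 𝕜 := by
  have hn : Fintype.card n ≠ 0 := by rintro hn; simp [hn] at hcard
  obtain ⟨c, hc⟩ : ∃ c : 𝕜, star c * c * Fintype.card n = 1 := by
    refine ⟨((Real.sqrt (Fintype.card n))⁻¹ : ℝ), ?_⟩
    rw [RCLike.star_def, RCLike.conj_ofReal, ← RCLike.ofReal_mul, ← mul_inv,
      Real.mul_self_sqrt (Nat.cast_nonneg _), RCLike.ofReal_inv, RCLike.ofReal_natCast,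
      inv_mul_cancel₀ (Nat.cast_ne_zero.mpr hn)]
  rw [← fromBlocks_one_mem_specialUnitaryGroup_iff (n := Unit),
    ← adjointMatrix_withScalar htr hc hU]
  refine (hB.withScalar_of_trace_eq_zero htr hc).adjointMatrix_mem_specialUnitaryGroup ?_ hU
  rw [Fintype.card_sum, Fintype.card_unit, add_comm, hcard, sq]

lemma im_trace_mul_conj_eq_zero {A B : Matrix n n ℂ} (hA : A.IsHermitian) (hB : B.IsHermitian)
    (U : Matrix n n ℂ) : (A * U * B * Uᴴ).trace.im = 0 := by
  rw [← conj_eq_iff_im, starRingEnd_apply, ← trace_conjTranspose]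
  calc (A * U * B * Uᴴ)ᴴ.trace = (U * B * Uᴴ * A).trace := by
        simp only [conjTranspose_mul, conjTranspose_conjTranspose, hA.eq, hB.eq, Matrix.mul_assoc]
    _ = (A * U * B * Uᴴ).trace := by
        rw [trace_mul_comm]; simp only [Matrix.mul_assoc]

lemma map_ofReal_realAdjointMatrix {B : ι → Matrix n n ℂ} (hB : ∀ i, (B i).IsHermitian)
    (U : Matrix n n ℂ) : (realAdjointMatrix B U).map ofRealHom = adjointMatrix B U := by
  ext i j
  have hentry : adjointMatrix B U i j = (B i * U * B j * Uᴴ).trace := by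
    simp only [adjointMatrix, of_apply, (hB i).eq, Matrix.mul_assoc]
  rw [hentry]
  exact Complex.ext rfl (im_trace_mul_conj_eq_zero (hB i) (hB j) U).symm

lemma map_ofReal_mem_specialUnitaryGroup_iff [Fintype ι] [DecidableEq ι] {A : Matrix ι ι ℝ} :
    A.map ofRealHom ∈ specialUnitaryGroup ι ℂ ↔ A ∈ specialOrthogonalGroup ι ℝ := by
  have hstar : star (A.map ofRealHom) = (star A).map ofRealHom := by
    ext i j; simp [star_apply]
  have hdet : (A.map ofRealHom).det = (A.det : ℂ) := (RingHom.map_det ofRealHom A).symm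
  have hone : (1 : Matrix ι ι ℂ) = (1 : Matrix ι ι ℝ).map ofRealHom := by simp
  rw [mem_specialUnitaryGroup_iff, mem_specialOrthogonalGroup_iff, mem_unitaryGroup_iff,
    mem_orthogonalGroup_iff, hstar, hdet, ofReal_eq_one, ← Matrix.map_mul, hone,
    (Matrix.map_injective (f := ofRealHom) ofReal_injective).eq_iff]
  rfl

theorem adjoint_is_special_orthogonal_general [Fintype ι] [DecidableEq ι] [DecidableEq n]
    {B : ι → Matrix n n ℂ}
    (hherm : ∀ i, (B i).IsHermitian) (horth : TraceOrthonormal B) (htr : ∀ i, (B i).trace = 0)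
    (hcard : Fintype.card ι + 1 = Fintype.card n ^ 2) {U : Matrix n n ℂ}
    (hU : U ∈ unitaryGroup n ℂ) :
    (∀ i j, (B i * U * B j * Uᴴ).trace.im = 0) ∧
    realAdjointMatrix B U * (realAdjointMatrix B U)ᵀ = 1 ∧ (realAdjointMatrix B U).det = 1 := by
  have hSO : realAdjointMatrix B U ∈ specialOrthogonalGroup ι ℝ := by
    rw [← map_ofReal_mem_specialUnitaryGroup_iff, map_ofReal_realAdjointMatrix hherm]
    exact horth.adjointMatrix_mem_specialUnitaryGroup_of_trace_eq_zero htr hcard hU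
  obtain ⟨hO, hdet⟩ := mem_specialOrthogonalGroup_iff.mp hSO
  exact ⟨fun i j => im_trace_mul_conj_eq_zero (hherm i) (hherm j) U,
    (mem_orthogonalGroup_iff ι ℝ).mp hO, hdet⟩

end AdjointMatrix

section QutritPauli

/-- Generators `Z, X, XZ, XZ²` of the four cyclic subgroups of order three of the qutrit Pauli
group modulo scalars; their `±` combinations are the matrices `Q`. -/
def pauli : Fin 4 → Matrix (Fin 3) (Fin 3) ℂ :=
  ![Zmat, Xmat, Xmat * Zmat, Xmat * Zmat ^ 2]

lemma omega_sq_add_omega_add_one : ω ^ 2 + ω + 1 = 0 := by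
  have h : (ω - 1) * (ω ^ 2 + ω + 1) = 0 := by linear_combination omega_cube
  exact (mul_eq_zero.mp h).resolve_left (sub_ne_zero.mpr omega_ne_one)

lemma conj_omega : starRingEnd ℂ ω = ω ^ 2 := by
  rw [← inv_eq_conj (norm_eq_one_of_pow_eq_one omega_cube three_ne_zero)]
  exact inv_eq_of_mul_eq_one_right (by rw [← pow_succ', omega_cube])

lemma inv_sqrt_six_mul_self : ((Real.sqrt 6 : ℂ))⁻¹ * (Real.sqrt 6 : ℂ)⁻¹ = 6⁻¹ := by
  rw [← mul_inv, ← ofReal_mul, Real.mul_self_sqrt (by norm_num), ofReal_ofNat]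

lemma pauli_conjTranspose (k : Fin 4) : (pauli k)ᴴ = pauli k ^ 2 := by
  have h3 := omega_cube
  fin_cases k <;> ext a b <;> fin_cases a <;> fin_cases b <;>
    simp [pauli, Xmat, Zmat, sq, conj_omega] <;> grind

lemma trace_pauli (k : Fin 4) : (pauli k).trace = 0 := by
  have h1 := omega_sq_add_omega_add_one
  fin_cases k <;> simp [pauli, Xmat, Zmat, trace_fin_three, sq]
  grind

lemma trace_pauli_mul_pauli (k l : Fin 4) : (pauli k * pauli l).trace = 0 := by
  have h1 := omega_sq_add_omega_add_one
  fin_cases k <;> fin_cases l <;> simp [pauli, Xmat, Zmat, trace_fin_three, sq]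
  grind

lemma trace_pauli_mul_pauli_sq (k l : Fin 4) :
    (pauli k * pauli l ^ 2).trace = if k = l then 3 else 0 := by
  have h1 := omega_sq_add_omega_add_one
  fin_cases k <;> fin_cases l <;> simp [pauli, Xmat, Zmat, trace_fin_three, sq] <;> grind

lemma trace_pauli_sq_mul_pauli (k l : Fin 4) :
    (pauli k ^ 2 * pauli l).trace = if k = l then 3 else 0 := by
  rw [trace_mul_comm, trace_pauli_mul_pauli_sq]
  exact if_congr eq_comm rfl rfl

lemma trace_pauli_sq (k : Fin 4) : (pauli k ^ 2).trace = 0 := by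
  rw [sq, trace_pauli_mul_pauli]

lemma trace_pauli_sq_mul_pauli_sq (k l : Fin 4) : (pauli k ^ 2 * pauli l ^ 2).trace = 0 := by
  rw [← pauli_conjTranspose, ← pauli_conjTranspose, ← conjTranspose_mul, trace_conjTranspose,
    trace_pauli_mul_pauli, star_zero]

lemma isHermitian_Pplus {P : Matrix (Fin 3) (Fin 3) ℂ} (hP : Pᴴ = P ^ 2) :
    (Pplus P).IsHermitian := by
  have hP' : (P ^ 2)ᴴ = P := by rw [← hP, conjTranspose_conjTranspose]
  simp [IsHermitian, Pplus, conjTranspose_smul, hP, hP', add_comm]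

lemma isHermitian_Pminus {P : Matrix (Fin 3) (Fin 3) ℂ} (hP : Pᴴ = P ^ 2) :
    (Pminus P).IsHermitian := by
  have hP' : (P ^ 2)ᴴ = P := by rw [← hP, conjTranspose_conjTranspose]
  rw [IsHermitian, Pminus, conjTranspose_smul, conjTranspose_sub, hP, hP', ← neg_sub P, smul_neg,
    ← neg_smul]
  simp

lemma trace_Pplus_mul_Pplus (P P' : Matrix (Fin 3) (Fin 3) ℂ) :
    (Pplus P * Pplus P').trace = 6⁻¹ * ((P * P').trace + (P * P' ^ 2).trace +
      (P ^ 2 * P').trace + (P ^ 2 * P' ^ 2).trace) := by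
  simp only [Pplus, smul_mul_smul_comm, inv_sqrt_six_mul_self, Matrix.add_mul, Matrix.mul_add,
    trace_smul, trace_add, smul_eq_mul]
  ring

lemma trace_Pminus_mul_Pminus (P P' : Matrix (Fin 3) (Fin 3) ℂ) :
    (Pminus P * Pminus P').trace = -6⁻¹ * ((P * P').trace - (P * P' ^ 2).trace -
      (P ^ 2 * P').trace + (P ^ 2 * P' ^ 2).trace) := by
  simp only [Pminus, smul_mul_smul_comm, mul_mul_mul_comm I, I_mul_I, inv_sqrt_six_mul_self,
    Matrix.sub_mul, Matrix.mul_sub, trace_smul, trace_sub, smul_eq_mul]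
  ring

lemma trace_Pplus_mul_Pminus (P P' : Matrix (Fin 3) (Fin 3) ℂ) :
    (Pplus P * Pminus P').trace = I * 6⁻¹ * ((P * P').trace - (P * P' ^ 2).trace +
      (P ^ 2 * P').trace - (P ^ 2 * P' ^ 2).trace) := by
  simp only [Pplus, Pminus, smul_mul_smul_comm, mul_left_comm _ I, inv_sqrt_six_mul_self,
    Matrix.add_mul, Matrix.mul_sub, trace_smul, trace_add, trace_sub, smul_eq_mul]
  ring

lemma trace_Pplus_pauli_mul_Pplus_pauli (k l : Fin 4) :
    (Pplus (pauli k) * Pplus (pauli l)).trace = if k = l then 1 else 0 := by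
  rw [trace_Pplus_mul_Pplus, trace_pauli_mul_pauli, trace_pauli_mul_pauli_sq,
    trace_pauli_sq_mul_pauli, trace_pauli_sq_mul_pauli_sq]
  split_ifs <;> norm_num

lemma trace_Pminus_pauli_mul_Pminus_pauli (k l : Fin 4) :
    (Pminus (pauli k) * Pminus (pauli l)).trace = if k = l then 1 else 0 := by
  rw [trace_Pminus_mul_Pminus, trace_pauli_mul_pauli, trace_pauli_mul_pauli_sq,
    trace_pauli_sq_mul_pauli, trace_pauli_sq_mul_pauli_sq]
  split_ifs <;> norm_num

lemma trace_Pplus_pauli_mul_Pminus_pauli (k l : Fin 4) :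
    (Pplus (pauli k) * Pminus (pauli l)).trace = 0 := by
  rw [trace_Pplus_mul_Pminus, trace_pauli_mul_pauli, trace_pauli_mul_pauli_sq,
    trace_pauli_sq_mul_pauli, trace_pauli_sq_mul_pauli_sq]
  ring

lemma Q_finSumFinEquiv (s : Fin 4 ⊕ Fin 4) :
    Q (finSumFinEquiv s) = s.elim (fun k => Pplus (pauli k)) fun k => Pminus (pauli k) := by
  rcases s with k | k <;> fin_cases k <;> rfl

lemma isHermitian_Q (i : Fin 8) : (Q i).IsHermitian := by
  obtain ⟨s, rfl⟩ := (finSumFinEquiv (m := 4) (n := 4)).surjective i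
  rw [Q_finSumFinEquiv]
  rcases s with k | k
  · exact isHermitian_Pplus (pauli_conjTranspose k)
  · exact isHermitian_Pminus (pauli_conjTranspose k)

lemma trace_Q (i : Fin 8) : (Q i).trace = 0 := by
  obtain ⟨s, rfl⟩ := (finSumFinEquiv (m := 4) (n := 4)).surjective i
  rw [Q_finSumFinEquiv]
  rcases s with k | k
  · simp [Pplus, trace_pauli, trace_pauli_sq]
  · simp [Pminus, trace_pauli, trace_pauli_sq]

lemma traceOrthonormal_Q : TraceOrthonormal Q := by
  intro i j
  obtain ⟨s, rfl⟩ := (finSumFinEquiv (m := 4) (n := 4)).surjective i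
  obtain ⟨t, rfl⟩ := (finSumFinEquiv (m := 4) (n := 4)).surjective j
  rw [(isHermitian_Q _).eq, Q_finSumFinEquiv, Q_finSumFinEquiv]
  simp only [EmbeddingLike.apply_eq_iff_eq]
  rcases s with k | k <;> rcases t with l | l
  · simp [trace_Pplus_pauli_mul_Pplus_pauli]
  · simp [trace_Pplus_pauli_mul_Pminus_pauli]
  · simp [trace_mul_comm (Pminus _), trace_Pplus_pauli_mul_Pminus_pauli]
  · simp [trace_Pminus_pauli_mul_Pminus_pauli]

end QutritPauli

/-- For every 3×3 unitary matrix U, the 8×8 matrix Û with entries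
Û_{ij} = tr(Qᵢ U Qⱼ U†) has real entries and, regarded as a real matrix, is special
orthogonal: Û·Ûᵀ = I₈ and det Û = 1. -/
theorem adjoint_is_special_orthogonal
    (U : Matrix (Fin 3) (Fin 3) ℂ) (hU : U ∈ Matrix.unitaryGroup (Fin 3) ℂ) :
    (∀ i j : Fin 8, (Matrix.trace (Q i * U * Q j * Uᴴ)).im = 0) ∧
    adj U * (adj U)ᵀ = 1 ∧ (adj U).det = 1 :=
  adjoint_is_special_orthogonal_general isHermitian_Q traceOrthonormal_Q trace_Q (by simp) hU

end
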